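/- Let K ≥ 2 be an integer and A,B integers with (A,B) not both ≡ 0 mod K. For every μ ∈ ℂ with Im μ > 0 and every γ ∈ ℂ with θ_{[00]}(γ;μ) ≠ 0, θ_{[AB]}(γ;μ) ≠ 0 and θ_{[AB]}(0;μ) ≠ 0, the function Z_{AB} satisfies the twist properties Z_{AB}(γ+1;μ) = ε^A·Z_{AB}(γ;μ) and Z_{AB}(γ+μ;μ) = ε^B·(Z_{AB}(γ;μ) − w_{AB}(γ;μ)), where ε = exp(2πi/K). -/

import Mathlib

open Complex Filter

/-- Theta function with characteristics `p, q`. -/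
noncomputable def Theta (p q : ℝ) (γ μ : ℂ) : ℂ :=
  ∑' m : ℤ, Complex.exp ((Real.pi : ℂ) * Complex.I * μ * ((m : ℂ) + (p : ℂ))^2
    + 2 * (Real.pi : ℂ) * Complex.I * ((m : ℂ) + (p : ℂ)) * (γ + (q : ℂ)))

/-- The Jacobi theta function `θ₁`. -/
noncomputable def theta1 (γ μ : ℂ) : ℂ := -Theta (1/2) (1/2) γ μ

/-- Logarithmic derivative of `θ₁` in the first argument. -/
noncomputable def rho (γ μ : ℂ) : ℂ := deriv (fun z => theta1 z μ) γ / theta1 γ μ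

/-- `θ_{[AB]}`, theta with characteristics `A/K - 1/2`, `1/2 - B/K`. -/
noncomputable def thetaAB (K : ℕ) (A B : ℤ) (γ μ : ℂ) : ℂ :=
  Theta ((A : ℝ)/(K : ℝ) - 1/2) (1/2 - (B : ℝ)/(K : ℝ)) γ μ

/-- The coefficients `w_{AB}` of the elliptic r-matrix. -/
noncomputable def wAB (K : ℕ) (A B : ℤ) (γ μ : ℂ) : ℂ :=
  thetaAB K A B γ μ * deriv (fun z => thetaAB K 0 0 z μ) 0
    / (thetaAB K A B 0 μ * thetaAB K 0 0 γ μ)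

/-- The functions `Z_{AB}`. -/
noncomputable def ZAB (K : ℕ) (A B : ℤ) (γ μ : ℂ) : ℂ :=
  wAB K A B γ μ / (2 * (Real.pi : ℂ) * Complex.I) *
    (deriv (fun z => thetaAB K A B z μ) γ / thetaAB K A B γ μ
      - deriv (fun z => thetaAB K A B z μ) 0 / thetaAB K A B 0 μ)

/-- `ε = exp(2πi/K)`. -/
noncomputable def epsK (K : ℕ) : ℂ := Complex.exp (2 * (Real.pi : ℂ) * Complex.I / (K : ℂ))

/-- The diagonal matrix `F = diag(1, ε, …, ε^{K-1})`. -/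
noncomputable def Fmat (K : ℕ) : Matrix (Fin K) (Fin K) ℂ :=
  Matrix.diagonal (fun i => epsK K ^ (i : ℕ))

/-- The cyclic permutation matrix `H`. -/
def Hmat (K : ℕ) : Matrix (Fin K) (Fin K) ℂ :=
  Matrix.of fun i j => if (j : ℕ) = ((i : ℕ) + 1) % K then 1 else 0

/-- `σ_{AB} = H^A F^B` (indices taken mod `K`, using `H^K = F^K = 1`). -/
noncomputable def sigmaAB (K : ℕ) (A B : ℤ) : Matrix (Fin K) (Fin K) ℂ :=
  Hmat K ^ ((A % (K : ℤ)).toNat) * Fmat K ^ ((B % (K : ℤ)).toNat)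

/-- The dual basis `σ^{AB} = (ε^{-AB}/K)·σ_{-A,-B}`. -/
noncomputable def sigmaDualAB (K : ℕ) (A B : ℤ) : Matrix (Fin K) (Fin K) ℂ :=
  (epsK K ^ (-(A * B)) / (K : ℂ)) • sigmaAB K (-A) (-B)

open Kronecker in
/-- The elliptic r-matrix. -/
noncomputable def rmat (K : ℕ) (γ μ : ℂ) : Matrix (Fin K × Fin K) (Fin K × Fin K) ℂ :=
  ∑ A ∈ Finset.range K, ∑ B ∈ Finset.range K,
    if A = 0 ∧ B = 0 then 0
    else wAB K A B γ μ • (sigmaAB K A B ⊗ₖ sigmaDualAB K A B)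


/-!
The multipliers of `θ_{[AB]}` under `γ ↦ γ + 1` and `γ ↦ γ + μ` are those of `θ_{[00]}` times
`ε ^ A` and `ε ^ B`, so these constants are the multipliers of the quotient `w_{AB}`. The
logarithmic derivative of `θ_{[AB]}` is invariant under `γ ↦ γ + 1`, but drops by `2πi` under
`γ ↦ γ + μ`, because the multiplier is then proportional to `exp (-2πiγ)`; this drop is the term
`-w_{AB}`. Only the ratios `A / K` and `B / K` matter, and they may be arbitrary real numbers.
-/

theorem logDeriv_comp_add_const {𝕜 𝕜' : Type*} [NontriviallyNormedField 𝕜]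
    [NontriviallyNormedField 𝕜'] [NormedAlgebra 𝕜 𝕜'] (f : 𝕜 → 𝕜') (τ x : 𝕜) :
    logDeriv (fun z => f (z + τ)) x = logDeriv f (x + τ) := by
  simp only [logDeriv_apply, deriv_comp_add_const]

theorem logDeriv_add_of_quasiperiodic {f : ℂ → ℂ} {τ c k x : ℂ} (hc : c ≠ 0)
    (h : ∀ z, f (z + τ) = c * cexp (k * z) * f z) (hf : DifferentiableAt ℂ f x) (hx : f x ≠ 0) :
    logDeriv f (x + τ) = logDeriv f x + k := by
  have hexp : logDeriv (fun z => c * cexp (k * z)) x = k := by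
    have hderiv : HasDerivAt (fun z => cexp (k * z)) (cexp (k * x) * k) x := by
      simpa using ((hasDerivAt_id x).const_mul k).cexp
    rw [logDeriv_const_mul x c hc, logDeriv_apply, hderiv.deriv,
      mul_div_cancel_left₀ k (Complex.exp_ne_zero _)]
  have hmult : c * cexp (k * x) ≠ 0 := mul_ne_zero hc (Complex.exp_ne_zero _)
  calc logDeriv f (x + τ) = logDeriv (fun z => c * cexp (k * z) * f z) x := by
        rw [← logDeriv_comp_add_const, funext h]
    _ = logDeriv (fun z => c * cexp (k * z)) x + logDeriv f x :=
        logDeriv_mul x hmult hx (by fun_prop) hf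
    _ = logDeriv f x + k := by rw [hexp, add_comm]

theorem Theta_eq_cexp_mul_jacobiTheta₂ (p q : ℝ) (γ μ : ℂ) :
    Theta p q γ μ = cexp (Real.pi * I * μ * p ^ 2 + 2 * Real.pi * I * p * (γ + q)) *
      jacobiTheta₂ (γ + q + p * μ) μ := by
  simp only [Theta, jacobiTheta₂, jacobiTheta₂_term, ← tsum_mul_left, ← Complex.exp_add]
  exact tsum_congr fun m => by ring_nf

theorem differentiable_Theta (p q : ℝ) {μ : ℂ} (hμ : 0 < μ.im) :
    Differentiable ℂ (Theta p q · μ) := by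
  have hjacobi : Differentiable ℂ (jacobiTheta₂ · μ) := fun z =>
    differentiableAt_jacobiTheta₂_fst z hμ
  simp only [Theta_eq_cexp_mul_jacobiTheta₂]
  fun_prop

theorem Theta_add_one (p q : ℝ) (γ μ : ℂ) :
    Theta p q (γ + 1) μ = cexp (2 * Real.pi * I * p) * Theta p q γ μ := by
  rw [Theta_eq_cexp_mul_jacobiTheta₂, Theta_eq_cexp_mul_jacobiTheta₂,
    show γ + 1 + q + p * μ = γ + q + p * μ + 1 by ring, jacobiTheta₂_add_left, ← mul_assoc,
    ← Complex.exp_add]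
  ring_nf

theorem Theta_add_modulus (p q : ℝ) (γ μ : ℂ) :
    Theta p q (γ + μ) μ =
      cexp (-Real.pi * I * (μ + 2 * q)) * cexp (-2 * Real.pi * I * γ) * Theta p q γ μ := by
  rw [Theta_eq_cexp_mul_jacobiTheta₂, Theta_eq_cexp_mul_jacobiTheta₂,
    show γ + μ + q + p * μ = γ + q + p * μ + μ by ring, jacobiTheta₂_add_left']
  simp only [← mul_assoc, ← Complex.exp_add]
  ring_nf

theorem logDeriv_Theta_add_one (p q : ℝ) (γ μ : ℂ) :
    logDeriv (Theta p q · μ) (γ + 1) = logDeriv (Theta p q · μ) γ := by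
  rw [← logDeriv_comp_add_const]
  simp only [Theta_add_one]
  exact logDeriv_const_mul γ _ (Complex.exp_ne_zero _)

theorem logDeriv_Theta_add_modulus {p q : ℝ} {γ μ : ℂ} (hμ : 0 < μ.im) (hγ : Theta p q γ μ ≠ 0) :
    logDeriv (Theta p q · μ) (γ + μ) = logDeriv (Theta p q · μ) γ - 2 * Real.pi * I := by
  rw [logDeriv_add_of_quasiperiodic (Complex.exp_ne_zero _) (Theta_add_modulus p q · μ)
    (differentiable_Theta p q hμ γ) hγ]
  ring

/-- The theta function `θ[a - 1/2, 1/2 - b]`, which is `θ_{[AB]}` when `a = A / K` and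
`b = B / K`. -/
noncomputable def thetaChar (a b : ℝ) (γ μ : ℂ) : ℂ := Theta (a - 1 / 2) (1 / 2 - b) γ μ

/-- The function `w_{AB}` with `A / K` and `B / K` replaced by real numbers `a` and `b`. -/
noncomputable def wChar (a b : ℝ) (γ μ : ℂ) : ℂ :=
  thetaChar a b γ μ * deriv (thetaChar 0 0 · μ) 0 / (thetaChar a b 0 μ * thetaChar 0 0 γ μ)

/-- The function `Z_{AB}` with `A / K` and `B / K` replaced by real numbers `a` and `b`. -/
noncomputable def ZChar (a b : ℝ) (γ μ : ℂ) : ℂ :=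
  wChar a b γ μ / (2 * Real.pi * I) *
    (logDeriv (thetaChar a b · μ) γ - logDeriv (thetaChar a b · μ) 0)

theorem thetaChar_add_one (a b : ℝ) (γ μ : ℂ) :
    thetaChar a b (γ + 1) μ = cexp (2 * Real.pi * I * a) * -thetaChar a b γ μ := by
  have hexp : cexp (2 * Real.pi * I * (a - 1 / 2 : ℝ)) = -cexp (2 * Real.pi * I * a) := by
    rw [← Complex.exp_sub_pi_mul_I]
    push_cast
    ring_nf
  rw [thetaChar, Theta_add_one, hexp, neg_mul_comm, thetaChar]

theorem thetaChar_add_modulus (a b : ℝ) (γ μ : ℂ) :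
    thetaChar a b (γ + μ) μ =
      cexp (2 * Real.pi * I * b) * (-cexp (-Real.pi * I * (μ + 2 * γ)) * thetaChar a b γ μ) := by
  have hexp : cexp (-Real.pi * I * (μ + 2 * (1 / 2 - b : ℝ))) * cexp (-2 * Real.pi * I * γ) =
      cexp (2 * Real.pi * I * b) * -cexp (-Real.pi * I * (μ + 2 * γ)) := by
    rw [← Complex.exp_sub_pi_mul_I, ← Complex.exp_add, ← Complex.exp_add]
    push_cast
    ring_nf
  rw [thetaChar, Theta_add_modulus, hexp, mul_assoc, thetaChar]

theorem wChar_add_one (a b : ℝ) (γ μ : ℂ) :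
    wChar a b (γ + 1) μ = cexp (2 * Real.pi * I * a) * wChar a b γ μ := by
  simp only [wChar, thetaChar_add_one, ofReal_zero, mul_zero, Complex.exp_zero, one_mul]
  rw [mul_neg, mul_neg, neg_mul, neg_div_neg_eq, mul_assoc, mul_div_assoc]

theorem wChar_add_modulus (a b : ℝ) (γ μ : ℂ) :
    wChar a b (γ + μ) μ = cexp (2 * Real.pi * I * b) * wChar a b γ μ := by
  have hmult : -cexp (-Real.pi * I * (μ + 2 * γ)) ≠ 0 := neg_ne_zero.mpr (Complex.exp_ne_zero _)
  simp only [wChar, thetaChar_add_modulus, ofReal_zero, mul_zero, Complex.exp_zero, one_mul]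
  rw [mul_left_comm (thetaChar a b 0 μ), mul_left_comm (cexp _), mul_assoc,
    mul_div_mul_left _ _ hmult, mul_assoc, mul_div_assoc]

theorem ZChar_add_one (a b : ℝ) (γ μ : ℂ) :
    ZChar a b (γ + 1) μ = cexp (2 * Real.pi * I * a) * ZChar a b γ μ := by
  have hlog : logDeriv (thetaChar a b · μ) (γ + 1) = logDeriv (thetaChar a b · μ) γ :=
    logDeriv_Theta_add_one _ _ γ μ
  rw [ZChar, wChar_add_one, hlog, ZChar]
  ring

theorem ZChar_add_modulus {a b : ℝ} {γ μ : ℂ} (hμ : 0 < μ.im) (hγ : thetaChar a b γ μ ≠ 0) :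
    ZChar a b (γ + μ) μ = cexp (2 * Real.pi * I * b) * (ZChar a b γ μ - wChar a b γ μ) := by
  have hlog : logDeriv (thetaChar a b · μ) (γ + μ) =
      logDeriv (thetaChar a b · μ) γ - 2 * Real.pi * I :=
    logDeriv_Theta_add_modulus hμ hγ
  rw [ZChar, wChar_add_modulus, hlog, ZChar]
  field_simp
  ring

theorem thetaAB_zero_zero (K : ℕ) : thetaAB K 0 0 = thetaChar 0 0 := by
  funext γ μ
  simp [thetaAB, thetaChar]

theorem wAB_eq_wChar (K : ℕ) (A B : ℤ) : wAB K A B = wChar (A / K) (B / K) := by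
  funext γ μ
  simp only [wAB, thetaAB_zero_zero]
  rfl

theorem ZAB_eq_ZChar (K : ℕ) (A B : ℤ) : ZAB K A B = ZChar (A / K) (B / K) := by
  funext γ μ
  simp only [ZAB, wAB_eq_wChar]
  rfl

theorem epsK_zpow (K : ℕ) (A : ℤ) : epsK K ^ A = cexp (2 * Real.pi * I * (A / K : ℝ)) := by
  rw [epsK, ← Complex.exp_int_mul]
  push_cast
  ring_nf

theorem ZAB_twists_general (a b : ℝ) (μ γ : ℂ) (hμ : 0 < μ.im) (_h00 : thetaChar 0 0 γ μ ≠ 0)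
    (hγ : thetaChar a b γ μ ≠ 0) (_h0 : thetaChar a b 0 μ ≠ 0) :
    ZChar a b (γ + 1) μ = cexp (2 * Real.pi * I * a) * ZChar a b γ μ ∧
    ZChar a b (γ + μ) μ = cexp (2 * Real.pi * I * b) * (ZChar a b γ μ - wChar a b γ μ) :=
  ⟨ZChar_add_one a b γ μ, ZChar_add_modulus hμ hγ⟩

/-- twist properties of `Z_{AB}`:
`Z_{AB}(γ+1) = ε^A·Z_{AB}(γ)` and `Z_{AB}(γ+μ) = ε^B·(Z_{AB}(γ) − w_{AB}(γ))`. -/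
theorem ZAB_twists (K : ℕ) (hK : 2 ≤ K) (A B : ℤ)
    (hAB : ¬(A % (K : ℤ) = 0 ∧ B % (K : ℤ) = 0)) (μ γ : ℂ) (hμ : 0 < μ.im)
    (h00 : thetaAB K 0 0 γ μ ≠ 0) (hγ : thetaAB K A B γ μ ≠ 0)
    (h0 : thetaAB K A B 0 μ ≠ 0) :
    ZAB K A B (γ + 1) μ = epsK K ^ A * ZAB K A B γ μ ∧
    ZAB K A B (γ + μ) μ = epsK K ^ B * (ZAB K A B γ μ - wAB K A B γ μ) := by
  simp only [ZAB_eq_ZChar, wAB_eq_wChar, epsK_zpow]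
  exact ZAB_twists_general (A / K) (B / K) μ γ hμ (thetaAB_zero_zero K ▸ h00) hγ h0
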